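/- arXiv:2310.06416 — 2 statements merged into one kernel-verified Lean document; each statement's English description precedes it below -/
import Mathlib

section
/- Let r > 0, t > 0 and let n ∈ ℕ be even. With x_0 = x_R = 0, let p(x,t) = f_L(x) + e^{−rt}·( f_{N(0,t)}(x) − (f_{N(0,t)} * f_L)(x) ), where f_L(x) = √(r/2)·e^{−√(2r)·|x|} and f_{N(0,t)}(x) = (2πt)^{−1/2}·e^{−x²/(2t)}. Then ∫_ℝ x^n·p(x,t) dx = (2r)^{−n/2}·n! + e^{−rt}·( t^{n/2}·(n−1)!! − Σ_{k equals 0 to n, k even} C(n,k)·t^{k/2}·(k−1)!!·(2r)^{−(n−k)/2}·(n−k)! ). -/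
open MeasureTheory

/-!
Moments of a convolution obey the binomial theorem: writing `x = y + (x - y)` and expanding `x ^ n`
turns the `n`-th moment of `f ⋆ g` into a binomial sum of products of moments of `f` and `g`.
Applied to the Gaussian and Laplace densities this reduces the theorem to their own moments: the odd
ones vanish by symmetry, and the even ones are both instances of the Gamma integral
`∫ |x| ^ q * exp (-b * |x| ^ p)`, with `p = 2` and `p = 1` respectively.
-/

section ConvolutionMoments

open Finset
open scoped Convolution

variable {E F G : Type*} [NormedAddCommGroup E] [NormedSpace ℝ E] [NormedAddCommGroup F]
  [NormedSpace ℝ F] [NormedAddCommGroup G] [NormedSpace ℝ G] (L : E →L[ℝ] F →L[ℝ] G)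
  {f : ℝ → E} {g : ℝ → F} {n : ℕ}

theorem pow_smul_convolution {x : ℝ}
    (hfg : ∀ k ≤ n, ConvolutionExistsAt (fun y ↦ y ^ k • f y) (fun y ↦ y ^ (n - k) • g y) x L) :
    x ^ n • (f ⋆[L, volume] g) x = ∑ k ∈ range (n + 1), (n.choose k : ℝ) •
      ((fun y ↦ y ^ k • f y) ⋆[L, volume] fun y ↦ y ^ (n - k) • g y) x := by
  have binomial (y : ℝ) : x ^ n • L (f y) (g (x - y)) = ∑ k ∈ range (n + 1),
      (n.choose k : ℝ) • L (y ^ k • f y) ((x - y) ^ (n - k) • g (x - y)) := by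
    nth_rw 1 [← add_sub_cancel y x]
    simp only [add_pow, sum_smul, map_smul, smul_apply, smul_smul]
    exact sum_congr rfl fun k _ ↦ by ring_nf
  simp only [convolution_def, ← integral_smul, binomial]
  rw [integral_finsetSum]
  exact fun k hk ↦ (hfg k (mem_range_succ_iff.mp hk)).integrable.smul (n.choose k : ℝ)

theorem pow_smul_convolution_ae_eq (hf : ∀ k ≤ n, Integrable fun x ↦ x ^ k • f x)
    (hg : ∀ k ≤ n, Integrable fun x ↦ x ^ k • g x) :
    (fun x ↦ x ^ n • (f ⋆[L, volume] g) x) =ᵐ[volume] fun x ↦ ∑ k ∈ range (n + 1),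
      (n.choose k : ℝ) •
        ((fun y ↦ y ^ k • f y) ⋆[L, volume] fun y ↦ y ^ (n - k) • g y) x := by
  have convolution_exists : ∀ᵐ x, ∀ k : ℕ, k ≤ n →
      ConvolutionExistsAt (fun y ↦ y ^ k • f y) (fun y ↦ y ^ (n - k) • g y) x L :=
    ae_all_iff.mpr fun k ↦ Filter.eventually_imp_distrib_left.mpr fun hk ↦
      (hf k hk).ae_convolution_exists L (hg (n - k) (n.sub_le k))
  filter_upwards [convolution_exists] with x hx using pow_smul_convolution L hx

theorem integrable_pow_smul_convolution (hf : ∀ k ≤ n, Integrable fun x ↦ x ^ k • f x)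
    (hg : ∀ k ≤ n, Integrable fun x ↦ x ^ k • g x) :
    Integrable fun x ↦ x ^ n • (f ⋆[L, volume] g) x := by
  refine (integrable_finsetSum _ fun k hk ↦ ?_).congr (pow_smul_convolution_ae_eq L hf hg).symm
  have hk : k ≤ n := mem_range_succ_iff.mp hk
  exact ((hf k hk).integrable_convolution L (hg (n - k) (n.sub_le k))).smul (n.choose k : ℝ)

theorem integral_pow_smul_convolution [CompleteSpace E] [CompleteSpace F] [CompleteSpace G]
    (hf : ∀ k ≤ n, Integrable fun x ↦ x ^ k • f x)
    (hg : ∀ k ≤ n, Integrable fun x ↦ x ^ k • g x) :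
    ∫ x, x ^ n • (f ⋆[L, volume] g) x = ∑ k ∈ range (n + 1), (n.choose k : ℝ) •
      L (∫ x, x ^ k • f x) (∫ x, x ^ (n - k) • g x) := by
  have hg' (k : ℕ) : Integrable fun x ↦ x ^ (n - k) • g x := hg (n - k) (n.sub_le k)
  rw [integral_congr_ae (pow_smul_convolution_ae_eq L hf hg), integral_finsetSum]
  · refine sum_congr rfl fun k hk ↦ ?_
    rw [integral_smul, integral_convolution L (hf k (mem_range_succ_iff.mp hk)) (hg' k)]
  · exact fun k hk ↦
      ((hf k (mem_range_succ_iff.mp hk)).integrable_convolution L (hg' k)).smul (n.choose k : ℝ)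

theorem integral_pow_mul_add_mul_sub_convolution {f g : ℝ → ℝ} (c : ℝ)
    (hf : ∀ k ≤ n, Integrable fun x ↦ x ^ k * f x)
    (hg : ∀ k ≤ n, Integrable fun x ↦ x ^ k * g x) :
    ∫ x, x ^ n * (g x + c * (f x - ∫ y, f (x - y) * g y)) = (∫ x, x ^ n * g x) +
      c * ((∫ x, x ^ n * f x) - ∑ k ∈ range (n + 1),
        (n.choose k : ℝ) * ((∫ x, x ^ k * f x) * ∫ x, x ^ (n - k) * g x)) := by
  have hfg := integrable_pow_smul_convolution (ContinuousLinearMap.mul ℝ ℝ) hf hg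
  have moment_fg := integral_pow_smul_convolution (ContinuousLinearMap.mul ℝ ℝ) hf hg
  simp only [smul_eq_mul, convolution_mul_swap, ContinuousLinearMap.mul_apply'] at hfg moment_fg
  have hcf := (hf n le_rfl).const_mul c
  have hcfg := hfg.const_mul c
  have h_sub : Integrable fun x ↦ c * (x ^ n * f x) - c * (x ^ n * ∫ y, f (x - y) * g y) :=
    hcf.sub hcfg
  simp only [← moment_fg, mul_add, mul_sub, mul_left_comm _ c]
  rw [integral_add (hg n le_rfl) h_sub, integral_sub hcf hcfg,
    integral_const_mul, integral_const_mul]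

end ConvolutionMoments

theorem integral_eq_zero_of_odd {G E : Type*} [AddGroup G] [MeasurableSpace G] [MeasurableNeg G]
    {μ : Measure G} [μ.IsNegInvariant] [NormedAddCommGroup E] [NormedSpace ℝ E] {f : G → E}
    (hf : f.Odd) : ∫ x, f x ∂μ = 0 := by
  have integral_eq_neg := integral_neg_eq_self f μ
  simp only [hf _, integral_neg] at integral_eq_neg
  have := IsAddTorsionFree.of_isTorsionFree ℝ E
  exact neg_eq_self.mp integral_eq_neg

section GammaIntegrals

open Real

variable {p q b : ℝ}

theorem integral_abs_rpow_mul_exp_neg_mul_abs_rpow (hp : 0 < p) (hq : -1 < q) (hb : 0 < b) :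
    ∫ x, |x| ^ q * exp (-b * |x| ^ p) =
      2 * (b ^ (-(q + 1) / p) * (1 / p) * Gamma ((q + 1) / p)) := by
  rw [integral_comp_abs (f := fun x ↦ x ^ q * exp (-b * x ^ p)),
    integral_rpow_mul_exp_neg_mul_rpow hp hq hb]

theorem integrable_abs_rpow_mul_exp_neg_mul_abs_rpow (hp : 0 < p) (hq : -1 < q) (hb : 0 < b) :
    Integrable fun x : ℝ ↦ |x| ^ q * exp (-b * |x| ^ p) := by
  have Gamma_pos : 0 < Gamma ((q + 1) / p) := Gamma_pos_of_pos (div_pos (by linarith) hp)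
  apply Integrable.of_integral_ne_zero
  rw [integral_abs_rpow_mul_exp_neg_mul_abs_rpow hp hq hb]
  positivity

theorem integrable_pow_mul_exp_neg_mul_abs_rpow (hp : 0 < p) (hb : 0 < b) (n : ℕ) :
    Integrable fun x : ℝ ↦ x ^ n * exp (-b * |x| ^ p) := by
  have hn : (-1 : ℝ) < n := neg_one_lt_zero.trans_le n.cast_nonneg
  refine (integrable_abs_rpow_mul_exp_neg_mul_abs_rpow hp hn hb).mono (by fun_prop) ?_
  exact ae_of_all _ fun x ↦ by simp

theorem integral_pow_mul_exp_neg_mul_abs_rpow_of_even (hp : 0 < p) (hb : 0 < b) {n : ℕ}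
    (hn : Even n) : ∫ x, x ^ n * exp (-b * |x| ^ p) =
      2 * (b ^ (-(n + 1) / p) * (1 / p) * Gamma ((n + 1) / p)) := by
  have hn' : (-1 : ℝ) < n := neg_one_lt_zero.trans_le n.cast_nonneg
  simp only [← integral_abs_rpow_mul_exp_neg_mul_abs_rpow hp hn' hb, rpow_natCast, hn.pow_abs]

end GammaIntegrals

section LaplaceDensity

open Real
open scoped Nat

/-- The density of the centered Laplace distribution, parametrized by its rate `s`, the inverse of
the scale. -/
noncomputable def laplacePDFReal (s x : ℝ) : ℝ := s / 2 * exp (-s * |x|)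

variable {s : ℝ}

theorem laplacePDFReal_sqrt_two_mul (r x : ℝ) :
    laplacePDFReal √(2 * r) x = √(r / 2) * exp (-√(2 * r) * |x|) := by
  have sqrt_half : √(r / 2) = √(2 * r) / 2 := by
    rw [show r / 2 = 2 * r / 2 ^ 2 by ring, sqrt_div' _ (by positivity), sqrt_sq zero_le_two]
  rw [laplacePDFReal, sqrt_half]

theorem integrable_pow_mul_laplacePDFReal (hs : 0 < s) (n : ℕ) :
    Integrable fun x ↦ x ^ n * laplacePDFReal s x := by
  simpa only [laplacePDFReal, rpow_one, mul_left_comm] using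
    (integrable_pow_mul_exp_neg_mul_abs_rpow one_pos hs n).const_mul (s / 2)

theorem integral_pow_mul_laplacePDFReal_of_even (hs : 0 < s) {n : ℕ} (hn : Even n) :
    ∫ x, x ^ n * laplacePDFReal s x = (s ^ n)⁻¹ * n ! := by
  have exp_moment := integral_pow_mul_exp_neg_mul_abs_rpow_of_even one_pos hs hn
  simp only [rpow_one, div_one, mul_one, Gamma_nat_eq_factorial, rpow_neg hs.le,
    rpow_add_one hs.ne', rpow_natCast] at exp_moment
  simp only [laplacePDFReal, mul_left_comm _ (s / 2), integral_const_mul, exp_moment]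
  field_simp

end LaplaceDensity

section GaussianDensity

open ProbabilityTheory Real
open scoped Nat NNReal

theorem gaussianPDFReal_zero_eq_exp_neg_mul_abs_rpow (v : ℝ≥0) (x : ℝ) :
    gaussianPDFReal 0 v x = (√(2 * π * v))⁻¹ * exp (-(2 * v : ℝ)⁻¹ * |x| ^ (2 : ℝ)) := by
  rw [gaussianPDFReal, sub_zero, rpow_two, sq_abs, neg_div, neg_mul, inv_mul_eq_div (2 * v : ℝ)]

theorem integrable_pow_mul_gaussianPDFReal_zero (v : ℝ≥0) (n : ℕ) :
    Integrable fun x ↦ x ^ n * gaussianPDFReal 0 v x := by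
  rcases eq_or_ne v 0 with rfl | hv
  · simp
  have hv : (0 : ℝ) < (2 * v : ℝ)⁻¹ := by positivity
  simpa only [gaussianPDFReal_zero_eq_exp_neg_mul_abs_rpow, mul_left_comm] using
    (integrable_pow_mul_exp_neg_mul_abs_rpow two_pos hv n).const_mul (√(2 * π * v))⁻¹

theorem integral_pow_mul_gaussianPDFReal_zero_of_odd (v : ℝ≥0) {n : ℕ} (hn : Odd n) :
    ∫ x, x ^ n * gaussianPDFReal 0 v x = 0 :=
  integral_eq_zero_of_odd fun x ↦ by simp [gaussianPDFReal, hn.neg_pow]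

theorem integral_pow_mul_gaussianPDFReal_zero_of_even {v : ℝ≥0} (hv : v ≠ 0) {n : ℕ}
    (hn : Even n) : ∫ x, x ^ n * gaussianPDFReal 0 v x = √v ^ n * (n - 1)‼ := by
  have exp_moment := integral_pow_mul_exp_neg_mul_abs_rpow_of_even
    (b := (2 * v : ℝ)⁻¹) two_pos (by positivity) hn
  obtain ⟨m, rfl⟩ := hn.two_dvd
  have half_moment_order : (((2 * m : ℕ) : ℝ) + 1) / 2 = m + 1 / 2 := by push_cast; ring
  have inv_rpow_eq : ((2 * v : ℝ)⁻¹) ^ (-(m + 1 / 2) : ℝ) = (2 * v) ^ m * √(2 * v) := by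
    rw [rpow_neg (by positivity), inv_rpow (by positivity), inv_inv, rpow_add (by positivity),
      rpow_natCast, ← sqrt_eq_rpow]
  rw [neg_div, half_moment_order, Gamma_nat_add_half, inv_rpow_eq] at exp_moment
  simp only [gaussianPDFReal_zero_eq_exp_neg_mul_abs_rpow, mul_left_comm _ (√(2 * π * v))⁻¹,
    integral_const_mul, exp_moment]
  rw [mul_right_comm 2 π, sqrt_mul (by positivity) π, pow_mul, sq_sqrt v.coe_nonneg, mul_pow]
  field_simp

end GaussianDensity

theorem rpow_neg_natCast_div_two {x : ℝ} (hx : 0 ≤ x) (n : ℕ) :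
    x ^ (-(n : ℝ) / 2) = (√x ^ n)⁻¹ := by
  rw [Real.rpow_div_two_eq_sqrt _ hx, Real.rpow_neg x.sqrt_nonneg, Real.rpow_natCast]

/-- Even moments of Brownian motion started at `0` with Poissonian resetting at
rate `r > 0` to `0`: for even `n`, the `n`-th moment of the explicit density
`p(x,t) = f_L(x) + e^{-rt}·(f_{N(0,t)}(x) - (f_{N(0,t)} * f_L)(x))` equals
`(2r)^{-n/2}·n! + e^{-rt}·(t^{n/2}·(n-1)!! - Σ_{k even} C(n,k)·t^{k/2}·(k-1)!!·(2r)^{-(n-k)/2}·(n-k)!)`. -/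
theorem resetting_even_moments (r t : ℝ) (hr : 0 < r) (ht : 0 < t)
    (n : ℕ) (hn : Even n)
    (fL fN0 p : ℝ → ℝ)
    (hfL : ∀ x, fL x = Real.sqrt (r / 2) * Real.exp (-(Real.sqrt (2 * r)) * |x|))
    (hfN0 : ∀ x, fN0 x = 1 / Real.sqrt (2 * Real.pi * t) * Real.exp (-x ^ 2 / (2 * t)))
    (hp : ∀ x, p x = fL x + Real.exp (-r * t) * (fN0 x - ∫ y : ℝ, fN0 (x - y) * fL y)) :
    (∫ x : ℝ, x ^ n * p x) =
      (2 * r) ^ (-(n : ℝ) / 2) * (n.factorial : ℝ) +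
        Real.exp (-r * t) *
          (t ^ ((n : ℝ) / 2) * (Nat.doubleFactorial (n - 1) : ℝ) -
            ∑ k ∈ Finset.range (n + 1),
              (if Even k then
                (n.choose k : ℝ) * t ^ ((k : ℝ) / 2) * (Nat.doubleFactorial (k - 1) : ℝ) *
                  (2 * r) ^ (-((n - k : ℕ) : ℝ) / 2) * ((n - k).factorial : ℝ)
              else 0)) := by
  have hs : 0 < √(2 * r) := by positivity
  have hLaplace : fL = laplacePDFReal √(2 * r) :=
    funext fun x ↦ (hfL x).trans (laplacePDFReal_sqrt_two_mul r x).symm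
  lift t to NNReal using ht.le
  have hGauss : fN0 = ProbabilityTheory.gaussianPDFReal 0 t :=
    funext fun x ↦ by rw [hfN0, ProbabilityTheory.gaussianPDFReal, one_div, sub_zero]
  have ht : t ≠ 0 := by exact_mod_cast ht.ne'
  simp only [hp, hLaplace, hGauss, Real.rpow_div_two_eq_sqrt _ t.coe_nonneg, Real.rpow_natCast,
    rpow_neg_natCast_div_two (x := 2 * r) (by positivity)]
  rw [integral_pow_mul_add_mul_sub_convolution _
      (fun k _ ↦ integrable_pow_mul_gaussianPDFReal_zero t k)
      (fun k _ ↦ integrable_pow_mul_laplacePDFReal hs k),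
    integral_pow_mul_laplacePDFReal_of_even hs hn,
    integral_pow_mul_gaussianPDFReal_zero_of_even ht hn]
  congr! 4 with k -
  split_ifs with hk_even
  · have hnk : Even (n - k) := hn.tsub hk_even
    rw [integral_pow_mul_gaussianPDFReal_zero_of_even ht hk_even,
      integral_pow_mul_laplacePDFReal_of_even hs hnk]
    ring
  · rw [integral_pow_mul_gaussianPDFReal_zero_of_odd t (Nat.not_even_iff_odd.mp hk_even),
      zero_mul, mul_zero]
end

section
/- Let r > 0 and p > 0, and set R(t) = (r/(p+1))·((t+1)^{p+1} − 1). Define MSD(t) = e^{−R(t)}·∫_0^t e^{R(ω)} dω. Then lim_{t→∞} r·(t+1)^p·MSD(t) = 1; in particular MSD(t) → 0 as t → ∞, so the process with increasing resetting intensity collapses toward the resetting point. -/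
open MeasureTheory Filter

/-! Put `q = R'` for the intensity and `J t = ∫₀ᵗ e^R`. The derivative of `J - e^R / q` is
`e^R * q' / q²`. When `q' = o(q²)`, which for `q = r (t + 1) ^ p` means `p > -1`, this is
`o(e^R) = o(J')`; since `J → ∞`, the comparison integrates to `J - e^R / q = o(J)`,
so that `MSD = e^{-R} J ~ 1 / q`. -/

open Set Asymptotics
open scoped Topology

section DerivativeAtTop

theorem exists_eventually_mul_add_le_of_le_deriv {g g' : ℝ → ℝ} {c : ℝ}
    (hg : ∀ᶠ t in atTop, HasDerivAt g (g' t) t) (hc : ∀ᶠ t in atTop, c ≤ g' t) :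
    ∃ b, ∀ᶠ t in atTop, c * t + b ≤ g t := by
  obtain ⟨T, hT⟩ := eventually_atTop.1 (hg.and hc)
  refine ⟨g T - c * T, eventually_atTop.2 ⟨T, fun t ht ↦ ?_⟩⟩
  have growth : c * (t - T) ≤ g t - g T := by
    refine (convex_Ici T).mul_sub_le_image_sub_of_le_deriv
      (fun x hx ↦ (hT x hx).1.continuousAt.continuousWithinAt)
      (fun x hx ↦ (hT x (interior_subset hx)).1.differentiableAt.differentiableWithinAt)
      (fun x hx ↦ ?_) T self_mem_Ici t ht ht
    obtain ⟨hderiv, hle⟩ := hT x (interior_subset hx)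
    exact hle.trans_eq hderiv.deriv.symm
  linarith

theorem isLittleO_of_hasDerivAt_atTop {E : Type*} [NormedAddCommGroup E] [NormedSpace ℝ E]
    {f f' : ℝ → E} {g g' : ℝ → ℝ} (hf : ∀ᶠ t in atTop, HasDerivAt f (f' t) t)
    (hg : ∀ᶠ t in atTop, HasDerivAt g (g' t) t) (hg' : ∀ᶠ t in atTop, 0 ≤ g' t)
    (hfg : f' =o[atTop] g') (hg_top : Tendsto g atTop atTop) : f =o[atTop] g := by
  refine isLittleO_iff.2 fun c hc ↦ ?_
  obtain ⟨T, hT⟩ := eventually_atTop.1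
    (hf.and (hg.and (hg'.and (isLittleO_iff.1 hfg (half_pos hc)))))
  have hB : ∀ x ∈ Ici T, HasDerivAt (fun x ↦ ‖f T‖ + c / 2 * (g x - g T)) (c / 2 * g' x) x :=
    fun x hx ↦ (((hT x hx).2.1.sub_const _).const_mul _).const_add _
  have norm_le : ∀ t ≥ T, ‖f t‖ ≤ ‖f T‖ + c / 2 * (g t - g T) := fun t ht ↦
    image_norm_le_of_norm_deriv_right_le_deriv_boundary'
      (fun x hx ↦ (hT x hx.1).1.continuousAt.continuousWithinAt)
      (fun x hx ↦ (hT x hx.1).1.hasDerivWithinAt) (by simp)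
      (fun x hx ↦ (hB x hx.1).continuousAt.continuousWithinAt)
      (fun x hx ↦ (hB x hx.1).hasDerivWithinAt)
      (fun x hx ↦ by
        obtain ⟨-, -, hnonneg, hle⟩ := hT x hx.1
        rwa [Real.norm_of_nonneg hnonneg] at hle)
      ⟨ht, le_rfl⟩
  have absorb : ∀ᶠ t in atTop, ‖f T‖ - c / 2 * g T ≤ c / 2 * g t :=
    (hg_top.const_mul_atTop (half_pos hc)).eventually_ge_atTop _
  filter_upwards [eventually_ge_atTop T, absorb, hg_top.eventually_ge_atTop 0]
    with t ht hconst hgt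
  rw [Real.norm_of_nonneg hgt]
  linarith [norm_le t ht]

end DerivativeAtTop

theorem hasDerivAt_integral_of_continuousOn_Ici {f : ℝ → ℝ} {a t : ℝ}
    (hf : ContinuousOn f (Ici a)) (ht : a < t) :
    HasDerivAt (fun u ↦ ∫ ω in a..u, f ω) (f t) t :=
  intervalIntegral.integral_hasDerivAt_right
    (hf.mono (uIcc_of_le ht.le ▸ Icc_subset_Ici_self)).intervalIntegrable
    ((hf.mono Ioi_subset_Ici_self).stronglyMeasurableAtFilter isOpen_Ioi t ht)
    (hf.continuousAt (Ici_mem_nhds ht))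

/-- The mean squared displacement at time `t` of a Brownian motion reset to its starting point,
where `R u` is the mean number of resets up to time `u`. -/
noncomputable def resettingMSD (R : ℝ → ℝ) (t : ℝ) : ℝ :=
  Real.exp (-R t) * ∫ ω in (0 : ℝ)..t, Real.exp (R ω)

section GeneralIntensity

variable {R q q' : ℝ → ℝ} {a : ℝ}

theorem tendsto_integral_exp_atTop (hR_cont : ContinuousOn R (Ici a))
    (hR : ∀ᶠ t in atTop, HasDerivAt R (q t) t) (hq_nonneg : ∀ᶠ t in atTop, 0 ≤ q t) :
    Tendsto (fun t ↦ ∫ ω in a..t, Real.exp (R ω)) atTop atTop := by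
  obtain ⟨b, hb⟩ := exists_eventually_mul_add_le_of_le_deriv hR hq_nonneg
  have exp_le : ∀ᶠ t in atTop, Real.exp b ≤ Real.exp (R t) := by
    filter_upwards [hb] with t ht
    exact Real.exp_le_exp.2 (by linarith)
  obtain ⟨d, hd⟩ := exists_eventually_mul_add_le_of_le_deriv
    ((eventually_gt_atTop a).mono fun t ↦ hasDerivAt_integral_of_continuousOn_Ici hR_cont.rexp)
    exp_le
  exact tendsto_atTop_mono' _ hd
    (tendsto_atTop_add_const_right _ d (tendsto_id.const_mul_atTop (Real.exp_pos b)))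

theorem integral_exp_isEquivalent_exp_div (hR_cont : ContinuousOn R (Ici a))
    (hR : ∀ᶠ t in atTop, HasDerivAt R (q t) t) (hq : ∀ᶠ t in atTop, HasDerivAt q (q' t) t)
    (hq_pos : ∀ᶠ t in atTop, 0 < q t) (hq' : q' =o[atTop] (q ^ 2)) :
    (fun t ↦ ∫ ω in a..t, Real.exp (R ω)) ~[atTop] fun t ↦ Real.exp (R t) / q t := by
  set J : ℝ → ℝ := fun t ↦ ∫ ω in a..t, Real.exp (R ω)
  have hJ : ∀ᶠ t in atTop, HasDerivAt J (Real.exp (R t)) t :=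
    (eventually_gt_atTop a).mono fun t ↦ hasDerivAt_integral_of_continuousOn_Ici hR_cont.rexp
  have hdiff : ∀ᶠ t in atTop, HasDerivAt (fun t ↦ Real.exp (R t) / q t - J t)
      (-(Real.exp (R t) * (q' t / q t ^ 2))) t := by
    filter_upwards [hJ, hR, hq, hq_pos] with t hJt hRt hqt hpos
    refine ((hRt.exp.div hqt hpos.ne').sub hJt).congr_deriv ?_
    field_simp
    ring
  have hsmall : (fun t ↦ -(Real.exp (R t) * (q' t / q t ^ 2))) =o[atTop]
      fun t ↦ Real.exp (R t) := by
    have hratio : (fun t ↦ q' t / q t ^ 2) =o[atTop] fun _ ↦ (1 : ℝ) :=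
      (isLittleO_one_iff ℝ).2 hq'.tendsto_div_nhds_zero
    simpa only [mul_one] using
      ((isBigO_refl (fun t ↦ Real.exp (R t)) atTop).mul_isLittleO hratio).neg_left
  exact IsEquivalent.symm <| isLittleO_of_hasDerivAt_atTop hdiff hJ
    (.of_forall fun _ ↦ (Real.exp_pos _).le) hsmall
    (tendsto_integral_exp_atTop hR_cont hR (hq_pos.mono fun _ ↦ le_of_lt))

theorem resettingMSD_isEquivalent_inv (hR_cont : ContinuousOn R (Ici 0))
    (hR : ∀ᶠ t in atTop, HasDerivAt R (q t) t) (hq : ∀ᶠ t in atTop, HasDerivAt q (q' t) t)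
    (hq_pos : ∀ᶠ t in atTop, 0 < q t) (hq' : q' =o[atTop] (q ^ 2)) :
    resettingMSD R ~[atTop] q⁻¹ := by
  have hmul := (IsEquivalent.refl (u := fun t ↦ Real.exp (-R t)) (l := atTop)).mul
    (integral_exp_isEquivalent_exp_div hR_cont hR hq hq_pos hq')
  refine hmul.congr_right (.of_forall fun t ↦ ?_)
  simp only [Pi.mul_apply, Pi.inv_apply, Real.exp_neg]
  field_simp

end GeneralIntensity

/-- The power-law resetting intensity `r(t) = r * (t + 1) ^ p`. -/
noncomputable def powerLawIntensity (r p t : ℝ) : ℝ := r * (t + 1) ^ p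

/-- The mean number of resets up to time `t` under `powerLawIntensity r p`, in closed form.
It is the integral of the intensity only for `p ≠ -1`; at `p = -1` it takes the junk value `0`. -/
noncomputable def powerLawResetCount (r p t : ℝ) : ℝ := r / (p + 1) * ((t + 1) ^ (p + 1) - 1)

section PowerLaw

variable {r p t : ℝ}

theorem powerLawIntensity_pos (hr : 0 < r) (ht : -1 < t) : 0 < powerLawIntensity r p t :=
  mul_pos hr (Real.rpow_pos_of_pos (by linarith) p)

theorem hasDerivAt_powerLawIntensity (ht : -1 < t) :
    HasDerivAt (powerLawIntensity r p) (r * p * (t + 1) ^ (p - 1)) t := by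
  have ht' : t + 1 ≠ 0 := by linarith
  refine ((((hasDerivAt_id' t).add_const 1).rpow_const (.inl ht')).const_mul r).congr_deriv ?_
  ring

theorem hasDerivAt_powerLawResetCount (hp : p ≠ -1) (ht : -1 < t) :
    HasDerivAt (powerLawResetCount r p) (powerLawIntensity r p t) t := by
  have ht' : t + 1 ≠ 0 := by linarith
  have hp' : p + 1 ≠ 0 := fun h ↦ hp (by linarith)
  refine (((((hasDerivAt_id' t).add_const 1).rpow_const (.inl ht')).sub_const 1).const_mul
    (r / (p + 1))).congr_deriv ?_
  rw [powerLawIntensity, add_sub_cancel_right]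
  field_simp

theorem tendsto_powerLawIntensity_atTop (hr : 0 < r) (hp : 0 < p) :
    Tendsto (powerLawIntensity r p) atTop atTop :=
  ((tendsto_rpow_atTop hp).comp (tendsto_atTop_add_const_right _ 1 tendsto_id)).const_mul_atTop hr

theorem tendsto_inv_powerLawIntensity_nhds_zero_iff (hr : 0 < r) :
    Tendsto (powerLawIntensity r p)⁻¹ atTop (𝓝 0) ↔ 0 < p := by
  refine ⟨fun h ↦ ?_, fun hp ↦ (tendsto_powerLawIntensity_atTop hr hp).inv_tendsto_atTop⟩
  by_contra! hp
  have inv_le : ∀ᶠ t in atTop, r⁻¹ ≤ (powerLawIntensity r p)⁻¹ t := by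
    filter_upwards [eventually_ge_atTop 0] with t ht
    refine inv_anti₀ (powerLawIntensity_pos hr (by linarith)) ?_
    exact mul_le_of_le_one_right hr.le (Real.rpow_le_one_of_one_le_of_nonpos (by linarith) hp)
  exact (inv_pos.2 hr).not_ge (ge_of_tendsto h inv_le)

theorem deriv_powerLawIntensity_isLittleO_sq (hr : r ≠ 0) (hp : -1 < p) :
    (fun t ↦ r * p * (t + 1) ^ (p - 1)) =o[atTop] (powerLawIntensity r p ^ 2) := by
  have hlim : Tendsto (fun t : ℝ ↦ p / r * (t + 1) ^ (-(p + 1))) atTop (𝓝 0) := by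
    have hp' : 0 < p + 1 := by linarith
    rw [← mul_zero (p / r)]
    exact ((tendsto_rpow_neg_atTop hp').comp
      (tendsto_atTop_add_const_right _ 1 tendsto_id)).const_mul (p / r)
  have hfactor : (fun t ↦ r * p * (t + 1) ^ (p - 1)) =ᶠ[atTop]
      fun t ↦ (p / r * (t + 1) ^ (-(p + 1))) * (powerLawIntensity r p ^ 2) t := by
    filter_upwards [eventually_gt_atTop (-1)] with t ht
    have ht' : 0 < t + 1 := by linarith
    have hexp : (t + 1) ^ (p - 1) = (t + 1) ^ (-(p + 1)) * ((t + 1) ^ p) ^ 2 := by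
      rw [sq, ← Real.rpow_add ht', ← Real.rpow_add ht']
      ring_nf
    rw [Pi.pow_apply, powerLawIntensity, hexp]
    field_simp
  exact isLittleO_iff_exists_eq_mul.2 ⟨_, hlim, hfactor⟩

theorem resettingMSD_powerLaw_isEquivalent_inv (hr : 0 < r) (hp : -1 < p) :
    resettingMSD (powerLawResetCount r p) ~[atTop] (powerLawIntensity r p)⁻¹ := by
  have ev_gt : ∀ᶠ t : ℝ in atTop, -1 < t := eventually_gt_atTop (-1)
  refine resettingMSD_isEquivalent_inv (fun t ht ↦ ?_)
    (ev_gt.mono fun t ↦ hasDerivAt_powerLawResetCount hp.ne')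
    (ev_gt.mono fun t ↦ hasDerivAt_powerLawIntensity)
    (ev_gt.mono fun t ↦ powerLawIntensity_pos hr)
    (deriv_powerLawIntensity_isLittleO_sq hr.ne' hp)
  exact (hasDerivAt_powerLawResetCount hp.ne'
    (neg_one_lt_zero.trans_le ht)).continuousAt.continuousWithinAt

end PowerLaw

theorem msd_power_law_collapse_general (r p : ℝ) (hr : 0 < r) (hp : -1 < p)
    (R MSD : ℝ → ℝ)
    (hR : ∀ t, R t = r / (p + 1) * ((t + 1) ^ (p + 1) - 1))
    (hMSD : ∀ t, MSD t = Real.exp (-R t) * ∫ ω in (0 : ℝ)..t, Real.exp (R ω)) :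
    Tendsto (fun t => r * (t + 1) ^ p * MSD t) atTop (nhds 1) ∧
      (Tendsto MSD atTop (nhds 0) ↔ 0 < p) := by
  obtain rfl : R = powerLawResetCount r p := funext hR
  obtain rfl : MSD = resettingMSD (powerLawResetCount r p) := funext hMSD
  have hequiv := resettingMSD_powerLaw_isEquivalent_inv hr hp
  have inv_ne_zero : ∀ᶠ t in atTop, (powerLawIntensity r p)⁻¹ t ≠ 0 :=
    (eventually_gt_atTop (-1)).mono fun t ht ↦ (inv_pos.2 (powerLawIntensity_pos hr ht)).ne'
  refine ⟨?_, hequiv.tendsto_nhds_iff.trans (tendsto_inv_powerLawIntensity_nhds_zero_iff hr)⟩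
  refine ((isEquivalent_iff_tendsto_one inv_ne_zero).1 hequiv).congr fun t ↦ ?_
  rw [Pi.div_apply, Pi.inv_apply, div_inv_eq_mul, mul_comm, powerLawIntensity]

/-- For power-law resetting intensity `r(t) = r·(t+1)^p` with `p > 0` and
`R(t) = (r/(p+1))·((t+1)^{p+1} - 1)`, the MSD `e^{-R(t)}·∫₀ᵗ e^{R(ω)} dω`
satisfies `r·(t+1)^p·MSD(t) → 1` as `t → ∞`; in particular `MSD(t) → 0`,
so the process collapses toward the resetting point. -/
theorem msd_power_law_collapse (r p : ℝ) (hr : 0 < r) (hp : 0 < p)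
    (R MSD : ℝ → ℝ)
    (hR : ∀ t, R t = r / (p + 1) * ((t + 1) ^ (p + 1) - 1))
    (hMSD : ∀ t, MSD t = Real.exp (-R t) * ∫ ω in (0 : ℝ)..t, Real.exp (R ω)) :
    Tendsto (fun t => r * (t + 1) ^ p * MSD t) atTop (nhds 1) ∧
      Tendsto MSD atTop (nhds 0) :=
  (msd_power_law_collapse_general r p hr (by linarith) R MSD hR hMSD).imp_right fun h ↦ h.2 hp
end
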